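/- Let I = (a, b) be an open real interval, let y : ℝ → ℝ be continuous on I, let g : ℝ → ℝ be nonnegative and locally integrable on I, and let K ≥ 0. Assume that (1/2) y' + g ≤ K holds in the sense of distributions on I, i.e. for every nonnegative smooth compactly supported function φ : ℝ → ℝ with support contained in I one has ∫ (−(1/2) y(t) φ'(t) + g(t) φ(t)) dt ≤ K ∫ φ(t) dt. Then for all s, t ∈ I with s ≤ t, y(t) + 2 ∫_s^t g(r) dr ≤ y(s) + 2K(t − s). -/

import Mathlib

open MeasureTheory Set Real
open Filter Function TopologicalSpace
open scoped Distributions Topology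

/-!
Test the inequality `f' ≤ h` against `φ = ρ_s - ρ_t`, where `ρ_c` is a smooth step rising from `0`
to `1` on `[c, c + ε]`. As `ε → 0⁺`, `φ` tends to the indicator of `(s, t]`, so `∫ h φ → ∫ₛᵗ h`,
while `φ'` is a difference of approximate identities concentrating to the right of `s` and of `t`,
so `-∫ f φ' → f t - f s`. The energy inequality is the case `f = y / 2`, `h = K - g`.
-/

theorem integrable_mul_of_tsupport_subset {X R : Type*} [TopologicalSpace X] [MeasurableSpace X]
    [OpensMeasurableSpace X] [NormedRing R] [SecondCountableTopologyEither X R] {μ : Measure X}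
    {U : Set X} {f ψ : X → R} (hf : LocallyIntegrableOn f U μ) (hψ : Continuous ψ)
    (hψc : HasCompactSupport ψ) (hψU : tsupport ψ ⊆ U) : Integrable (fun x ↦ f x * ψ x) μ := by
  refine (integrableOn_iff_integrable_of_support_subset ?_).1
    ((hf.integrableOn_compact_subset hψU hψc).mul_continuousOn_of_subset hψ.continuousOn
      (isClosed_tsupport ψ).measurableSet hψc subset_rfl)
  exact (support_mul_subset_right f ψ).trans (subset_tsupport ψ)

theorem setIntegral_mul_eq_integral_of_support_subset {X R : Type*} [MeasurableSpace X]
    [NonUnitalNormedRing R] [NormedSpace ℝ R] {μ : Measure X} {S : Set X} {f ψ : X → R}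
    (hψ : support ψ ⊆ S) : ∫ x in S, f x * ψ x ∂μ = ∫ x, f x * ψ x ∂μ :=
  setIntegral_eq_integral_of_forall_compl_eq_zero fun x hx ↦ by
    rw [notMem_support.1 (notMem_subset hψ hx), mul_zero]

theorem eventually_add_le_of_lt {c d : ℝ} (hcd : c < d) : ∀ᶠ ε in 𝓝[>] (0 : ℝ), c + ε ≤ d := by
  filter_upwards [Ioc_mem_nhdsGT (sub_pos.2 hcd)] with ε hε
  linarith [hε.2]

section SmoothStep

/-- A smooth approximation of the Heaviside function at `c`: it vanishes up to `c` and equals `1`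
from `c + ε` on. The scale `ε` is meant to be positive. -/
noncomputable def smoothStep (c ε x : ℝ) : ℝ := smoothTransition ((x - c) / ε)

variable {c d s t ε x : ℝ}

theorem smoothStep_nonneg : 0 ≤ smoothStep c ε x := smoothTransition.nonneg _

theorem smoothStep_le_one : smoothStep c ε x ≤ 1 := smoothTransition.le_one _

theorem smoothStep_eq_zero (hε : 0 < ε) (hx : x ≤ c) : smoothStep c ε x = 0 :=
  smoothTransition.zero_of_nonpos (div_nonpos_of_nonpos_of_nonneg (sub_nonpos.2 hx) hε.le)

theorem smoothStep_eq_one (hε : 0 < ε) (hx : c + ε ≤ x) : smoothStep c ε x = 1 :=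
  smoothTransition.one_of_one_le ((one_le_div hε).2 (by linarith))

theorem monotone_smoothStep (hε : 0 < ε) : Monotone (smoothStep c ε) := fun x z hxz ↦
  smoothTransition.monotone (by gcongr)

theorem smoothStep_le_smoothStep (hε : 0 < ε) (hst : s ≤ t) :
    smoothStep t ε x ≤ smoothStep s ε x :=
  smoothTransition.monotone (by gcongr)

theorem contDiff_smoothStep : ContDiff ℝ (⊤ : ℕ∞) (smoothStep c ε) :=
  smoothTransition.contDiff.comp (by fun_prop)

theorem differentiable_smoothStep : Differentiable ℝ (smoothStep c ε) :=
  contDiff_smoothStep.differentiable (by simp)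

theorem continuous_deriv_smoothStep : Continuous (deriv (smoothStep c ε)) :=
  contDiff_smoothStep.continuous_deriv (by simp)

theorem support_deriv_smoothStep_subset (hε : 0 < ε) (hd : c + ε ≤ d) :
    support (deriv (smoothStep c ε)) ⊆ Icc c d := by
  refine fun x hx ↦ ⟨le_of_not_gt fun hxc ↦ hx ?_, le_of_not_gt fun hdx ↦ hx ?_⟩
  · have hmin : IsMinOn (smoothStep c ε) univ x := fun z _ ↦
      (smoothStep_eq_zero hε hxc.le).trans_le smoothStep_nonneg
    exact (hmin.isLocalMin univ_mem).deriv_eq_zero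
  · have hmax : IsMaxOn (smoothStep c ε) univ x := fun z _ ↦
      smoothStep_le_one.trans_eq (smoothStep_eq_one hε (hd.trans hdx.le)).symm
    exact (hmax.isLocalMax univ_mem).deriv_eq_zero

theorem integral_deriv_smoothStep (hε : 0 < ε) (hd : c + ε ≤ d) :
    ∫ x in Icc c d, deriv (smoothStep c ε) x = 1 := by
  rw [integral_Icc_eq_integral_Ioc, ← intervalIntegral.integral_of_le (by linarith),
    intervalIntegral.integral_deriv_eq_sub (fun x _ ↦ differentiable_smoothStep x)
      (continuous_deriv_smoothStep.intervalIntegrable _ _),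
    smoothStep_eq_one hε hd, smoothStep_eq_zero hε le_rfl, sub_zero]

theorem integrable_mul_deriv_smoothStep {f : ℝ → ℝ} (hε : 0 < ε) (hd : c + ε ≤ d)
    (hf : IntegrableOn f (Icc c d)) : Integrable (fun x ↦ f x * deriv (smoothStep c ε) x) :=
  have hsupp := support_deriv_smoothStep_subset hε hd
  integrable_mul_of_tsupport_subset hf.locallyIntegrableOn continuous_deriv_smoothStep
    (.of_support_subset_isCompact isCompact_Icc hsupp) (closure_minimal hsupp isClosed_Icc)

theorem tendstoUniformlyOn_deriv_smoothStep {u : Set ℝ} (hu : u ∈ 𝓝[≥] c) :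
    TendstoUniformlyOn (fun ε ↦ deriv (smoothStep c ε)) 0 (𝓝[>] 0) uᶜ := by
  obtain ⟨d, hcd, hdu⟩ := mem_nhdsGE_iff_exists_Icc_subset.1 hu
  intro V hV
  filter_upwards [self_mem_nhdsWithin, eventually_add_le_of_lt hcd] with ε hε hεd x hx
  have hzero : deriv (smoothStep c ε) x = 0 := notMem_support.1 <|
    notMem_subset ((support_deriv_smoothStep_subset hε hεd).trans hdu) hx
  rw [hzero]
  exact refl_mem_uniformity hV

theorem tendsto_integral_mul_deriv_smoothStep {f : ℝ → ℝ} (hcd : c < d)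
    (hf : IntegrableOn f (Icc c d)) (hfc : ContinuousWithinAt f (Ici c) c) :
    Tendsto (fun ε ↦ ∫ x, f x * deriv (smoothStep c ε) x) (𝓝[>] 0) (𝓝 (f c)) := by
  have hpeak : Tendsto (fun ε ↦ ∫ x in Icc c d, deriv (smoothStep c ε) x • f x) (𝓝[>] 0)
      (𝓝 (f c)) := by
    refine tendsto_setIntegral_peak_smul_of_integrableOn_of_tendsto measurableSet_Icc
      measurableSet_Icc subset_rfl self_mem_nhdsWithin measure_Icc_lt_top.ne ?nonneg ?uniform
      ?mass (.of_forall fun _ ↦ continuous_deriv_smoothStep.aestronglyMeasurable) hf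
      (hfc.mono Icc_subset_Ici_self)
    case nonneg =>
      filter_upwards [self_mem_nhdsWithin] with ε hε x _
      exact (monotone_smoothStep hε).deriv_nonneg
    case uniform =>
      exact fun u hu hcu ↦ (tendstoUniformlyOn_deriv_smoothStep
        (mem_nhdsWithin_of_mem_nhds (hu.mem_nhds hcu))).mono fun x hx ↦ hx.2
    case mass =>
      refine tendsto_nhds_of_eventually_eq ?_
      filter_upwards [self_mem_nhdsWithin, eventually_add_le_of_lt hcd] with ε hε hεd
      exact integral_deriv_smoothStep hε hεd
  refine hpeak.congr' ?_
  filter_upwards [self_mem_nhdsWithin, eventually_add_le_of_lt hcd] with ε hε hεd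
  simp only [smul_eq_mul, mul_comm (deriv _ _)]
  exact setIntegral_mul_eq_integral_of_support_subset (support_deriv_smoothStep_subset hε hεd)

theorem tendsto_smoothStep : Tendsto (fun ε ↦ smoothStep c ε x) (𝓝[>] 0)
    (𝓝 ((Ioi c).indicator 1 x)) := by
  refine tendsto_nhds_of_eventually_eq ?_
  rcases le_or_gt x c with hx | hx
  · filter_upwards [self_mem_nhdsWithin] with ε hε
    rw [smoothStep_eq_zero hε hx, indicator_of_notMem (notMem_Ioi.2 hx)]
  · filter_upwards [self_mem_nhdsWithin, eventually_add_le_of_lt hx] with ε hε hεx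
    rw [smoothStep_eq_one hε hεx, indicator_of_mem (mem_Ioi.2 hx), Pi.one_apply]

end SmoothStep

section SmoothPlateau

/-- For `s ≤ t`, a smooth approximation of the indicator of `(s, t]`, supported in `[s, t + ε]`. -/
noncomputable def smoothPlateau (s t ε x : ℝ) : ℝ := smoothStep s ε x - smoothStep t ε x

variable {s t t' ε x : ℝ}

theorem smoothPlateau_nonneg (hε : 0 < ε) (hst : s ≤ t) : 0 ≤ smoothPlateau s t ε x :=
  sub_nonneg.2 (smoothStep_le_smoothStep hε hst)

theorem abs_smoothPlateau_le_one : |smoothPlateau s t ε x| ≤ 1 :=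
  abs_sub_le_of_nonneg_of_le smoothStep_nonneg smoothStep_le_one smoothStep_nonneg
    smoothStep_le_one

theorem contDiff_smoothPlateau : ContDiff ℝ (⊤ : ℕ∞) (smoothPlateau s t ε) :=
  contDiff_smoothStep.sub contDiff_smoothStep

theorem deriv_smoothPlateau :
    deriv (smoothPlateau s t ε) x = deriv (smoothStep s ε) x - deriv (smoothStep t ε) x :=
  deriv_sub (differentiable_smoothStep x) (differentiable_smoothStep x)

theorem support_smoothPlateau_subset (hε : 0 < ε) (hst : s ≤ t) (ht' : t + ε ≤ t') :
    support (smoothPlateau s t ε) ⊆ Icc s t' := by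
  refine fun x hx ↦ ⟨le_of_not_gt fun hxs ↦ hx ?_, le_of_not_gt fun htx ↦ hx ?_⟩
  · simp only [smoothPlateau, smoothStep_eq_zero hε hxs.le,
      smoothStep_eq_zero hε (hxs.le.trans hst), sub_self]
  · simp only [smoothPlateau, smoothStep_eq_one hε (ht'.trans htx.le),
      smoothStep_eq_one hε (show s + ε ≤ x by linarith), sub_self]

theorem tendsto_smoothPlateau (hst : s ≤ t) : Tendsto (fun ε ↦ smoothPlateau s t ε x) (𝓝[>] 0)
    (𝓝 ((Ioc s t).indicator 1 x)) := by
  rw [← Ioi_sdiff_Ioi, indicator_sdiff (Ioi_subset_Ioi hst)]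
  exact tendsto_smoothStep.sub tendsto_smoothStep

theorem tendsto_integral_mul_smoothPlateau {h : ℝ → ℝ} (hst : s ≤ t) (htt' : t < t')
    (hh : IntegrableOn h (Icc s t')) :
    Tendsto (fun ε ↦ ∫ x, h x * smoothPlateau s t ε x) (𝓝[>] 0) (𝓝 (∫ x in s..t, h x)) := by
  have hlim : ∫ x in Icc s t', h x * (Ioc s t).indicator 1 x = ∫ x in s..t, h x := by
    simp only [← indicator_mul_right, Pi.one_apply, mul_one]
    rw [setIntegral_indicator measurableSet_Ioc, inter_eq_self_of_subset_right
      (Ioc_subset_Icc_self.trans (Icc_subset_Icc_right htt'.le)),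
      intervalIntegral.integral_of_le hst]
  have hset : ∀ᶠ ε in 𝓝[>] 0, ∫ x in Icc s t', h x * smoothPlateau s t ε x =
      ∫ x, h x * smoothPlateau s t ε x := by
    filter_upwards [self_mem_nhdsWithin, eventually_add_le_of_lt htt'] with ε hε hεt'
    exact setIntegral_mul_eq_integral_of_support_subset (support_smoothPlateau_subset hε hst hεt')
  rw [← hlim]
  refine Tendsto.congr' hset (tendsto_integral_filter_of_dominated_convergence (fun x ↦ |h x|)
    (.of_forall fun ε ↦ ?_) (.of_forall fun ε ↦ .of_forall fun x ↦ ?_) hh.abs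
    (.of_forall fun x ↦ (tendsto_smoothPlateau hst).const_mul _))
  · exact hh.aestronglyMeasurable.mul contDiff_smoothPlateau.continuous.aestronglyMeasurable
  · rw [norm_mul, Real.norm_eq_abs, Real.norm_eq_abs]
    exact mul_le_of_le_one_right (abs_nonneg _) abs_smoothPlateau_le_one

/-- `smoothPlateau s t ε` as a test function on an open set containing its support. -/
noncomputable def smoothPlateauTestFunction {Ω : Opens ℝ} (hε : 0 < ε) (hst : s ≤ t)
    (ht' : t + ε ≤ t') (hΩ : Icc s t' ⊆ Ω) : 𝓓(Ω, ℝ) where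
  toFun := smoothPlateau s t ε
  contDiff' := contDiff_smoothPlateau
  hasCompactSupport' := .of_support_subset_isCompact isCompact_Icc
    (support_smoothPlateau_subset hε hst ht')
  tsupport_subset' :=
    (closure_minimal (support_smoothPlateau_subset hε hst ht') isClosed_Icc).trans hΩ

end SmoothPlateau

/-- The inequality `f' ≤ h` on `Ω` in the sense of distributions, for functions `f` and `h` that
are locally integrable on `Ω` (otherwise the integrals may take the junk value `0`). -/
def DistribDerivLE (f h : ℝ → ℝ) (Ω : Opens ℝ) : Prop :=
  ∀ φ : 𝓓(Ω, ℝ), (∀ x, 0 ≤ φ x) → -∫ x, f x * deriv φ x ≤ ∫ x, h x * φ x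

theorem DistribDerivLE.sub_le_integral {f h : ℝ → ℝ} {Ω : Opens ℝ} {s t : ℝ}
    (hfh : DistribDerivLE f h Ω) (hf : LocallyIntegrableOn f Ω) (hh : LocallyIntegrableOn h Ω)
    (hst : s ≤ t) (hΩ : Icc s t ⊆ Ω) (hfs : ContinuousWithinAt f (Ici s) s)
    (hft : ContinuousWithinAt f (Ici t) t) :
    f t - f s ≤ ∫ x in s..t, h x := by
  obtain ⟨t', htt', htΩ⟩ := mem_nhdsGE_iff_exists_Icc_subset.1 <|
    mem_nhdsWithin_of_mem_nhds (Ω.isOpen.mem_nhds (hΩ (right_mem_Icc.2 hst)))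
  have hΩ' : Icc s t' ⊆ Ω := by
    rw [← Icc_union_Icc_eq_Icc hst (le_of_lt htt')]
    exact union_subset hΩ htΩ
  have hfI : IntegrableOn f (Icc s t') := hf.integrableOn_compact_subset hΩ' isCompact_Icc
  have hhI : IntegrableOn h (Icc s t') := hh.integrableOn_compact_subset hΩ' isCompact_Icc
  have hfI' : IntegrableOn f (Icc t t') := hfI.mono_set (Icc_subset_Icc_left hst)
  have hlim := (tendsto_integral_mul_deriv_smoothStep htt' hfI' hft).sub
    (tendsto_integral_mul_deriv_smoothStep (hst.trans_lt htt') hfI hfs)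
  refine le_of_tendsto_of_tendsto hlim (tendsto_integral_mul_smoothPlateau hst htt' hhI) ?_
  filter_upwards [self_mem_nhdsWithin, eventually_add_le_of_lt htt'] with ε hε hεt'
  calc (∫ x, f x * deriv (smoothStep t ε) x) - ∫ x, f x * deriv (smoothStep s ε) x
      = -∫ x, f x * deriv (smoothPlateau s t ε) x := by
        simp only [deriv_smoothPlateau, mul_sub]
        rw [integral_sub (integrable_mul_deriv_smoothStep hε (by linarith) hfI)
          (integrable_mul_deriv_smoothStep hε hεt' hfI'), neg_sub]
    _ ≤ ∫ x, h x * smoothPlateau s t ε x :=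
        hfh (smoothPlateauTestFunction hε hst hεt' hΩ') fun x ↦ smoothPlateau_nonneg hε hst

theorem distribDerivLE_of_energy_inequality {Ω : Opens ℝ} {y g : ℝ → ℝ} {K : ℝ}
    (hy : LocallyIntegrableOn y Ω) (hg : LocallyIntegrableOn g Ω)
    (hineq : ∀ φ : 𝓓(Ω, ℝ), (∀ t, 0 ≤ φ t) →
      ∫ t, (-(1/2) * y t * deriv φ t + g t * φ t) ≤ K * ∫ t, φ t) :
    DistribDerivLE (fun t ↦ 1 / 2 * y t) (fun t ↦ K - g t) Ω := by
  intro φ hφ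
  have hyφ : Integrable (fun t ↦ y t * deriv φ t) :=
    integrable_mul_of_tsupport_subset hy (φ.contDiff.continuous_deriv (by simp))
      φ.hasCompactSupport.deriv (tsupport_deriv_subset.trans φ.tsupport_subset)
  have hgφ : Integrable (fun t ↦ g t * φ t) :=
    integrable_mul_of_tsupport_subset hg φ.continuous φ.hasCompactSupport φ.tsupport_subset
  have hφI : Integrable φ := φ.continuous.integrable_of_hasCompactSupport φ.hasCompactSupport
  have hineqφ := hineq φ hφ
  simp only [mul_assoc] at hineqφ ⊢
  rw [integral_add (hyφ.const_mul _) hgφ, integral_const_mul] at hineqφ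
  simp only [sub_mul]
  rw [integral_sub (hφI.const_mul K) hgφ, integral_const_mul, integral_const_mul]
  linarith

theorem energy_inequality_integrated_general {Ω : Opens ℝ} {y g : ℝ → ℝ} {K : ℝ}
    (hy : ContinuousOn y Ω) (hg : LocallyIntegrableOn g Ω)
    (hineq : ∀ φ : 𝓓(Ω, ℝ), (∀ t, 0 ≤ φ t) →
      ∫ t, (-(1/2) * y t * deriv φ t + g t * φ t) ≤ K * ∫ t, φ t)
    {s t : ℝ} (hst : s ≤ t) (hΩ : Icc s t ⊆ Ω) :
    y t + 2 * ∫ r in s..t, g r ≤ y s + 2 * K * (t - s) := by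
  have hyI : LocallyIntegrableOn y Ω := hy.locallyIntegrableOn Ω.isOpen.measurableSet
  have hcont : ∀ x ∈ Icc s t, ContinuousWithinAt (fun r ↦ 1 / 2 * y r) (Ici x) x := fun x hx ↦
    (continuousAt_const.mul (hy.continuousAt (Ω.isOpen.mem_nhds (hΩ hx)))).continuousWithinAt
  have hgI : IntervalIntegrable g volume s t :=
    (intervalIntegrable_iff_integrableOn_Icc_of_le hst).2 <|
      hg.integrableOn_compact_subset hΩ isCompact_Icc
  have hsub : 1 / 2 * y t - 1 / 2 * y s ≤ ∫ r in s..t, (K - g r) :=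
    (distribDerivLE_of_energy_inequality hyI hg hineq).sub_le_integral (hyI.smul (1 / 2 : ℝ))
      ((locallyIntegrableOn_const K).sub hg) hst hΩ (hcont s (left_mem_Icc.2 hst))
      (hcont t (right_mem_Icc.2 hst))
  rw [intervalIntegral.integral_sub intervalIntegrable_const hgI,
    intervalIntegral.integral_const, smul_eq_mul] at hsub
  linarith

/-- Integrated energy inequality from `(1/2) y' + g ≤ K` in the sense of
distributions on the open interval `(a, b)`. -/
theorem energy_inequality_integrated
    (a b : ℝ) (y g : ℝ → ℝ) (K : ℝ)
    (hy : ContinuousOn y (Ioo a b))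
    (hg0 : ∀ t ∈ Ioo a b, 0 ≤ g t)
    (hgloc : LocallyIntegrableOn g (Ioo a b))
    (hK : 0 ≤ K)
    (hineq : ∀ φ : ℝ → ℝ, ContDiff ℝ (⊤ : ℕ∞) φ → HasCompactSupport φ →
      (∀ t, 0 ≤ φ t) → tsupport φ ⊆ Ioo a b →
      ∫ t, (-(1/2) * y t * deriv φ t + g t * φ t) ≤ K * ∫ t, φ t) :
    ∀ s ∈ Ioo a b, ∀ t ∈ Ioo a b, s ≤ t →
      y t + 2 * ∫ r in s..t, g r ≤ y s + 2 * K * (t - s) :=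
  fun _ hs _ ht hst ↦ energy_inequality_integrated_general (Ω := ⟨Ioo a b, isOpen_Ioo⟩) hy hgloc
    (fun φ hφ ↦ hineq φ φ.contDiff φ.hasCompactSupport hφ φ.tsupport_subset) hst
    (Icc_subset_Ioo hs.1 ht.2)
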